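/- arXiv:2101.08080 — 2 statements merged into one kernel-verified Lean document; each statement's English description precedes it below -/
import Mathlib

section
/- Assume G ∈ C²(Ω × Y × ℝ) satisfies (Reg), (Mono), (Twist), (UC), (Gen_Ω) and (Gen_∂X), that X ⊆ Ω is compact and ρ is a continuous probability density supported in X. Then for any δ > 0 there exists α ∈ ℝ such that the set S_ad = {ψ ∈ ℝ^N : ψ₁ = α and ∀ i ∈ {1,…,N}, Hᵢ(ψ) ≥ δ} is a compact subset of ℝ^N. Moreover, if δ ≤ 1/2^{N−1}, this set S_ad is non-empty. -/
set_option autoImplicit false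

open MeasureTheory Set

noncomputable section

variable {d N : ℕ}

/-- Generalized Laguerre cell associated to `ψ` and index `i`. -/
def Lag (Ω : Set (EuclideanSpace ℝ (Fin d))) (G : EuclideanSpace ℝ (Fin d) → Fin N → ℝ → ℝ)
    (ψ : Fin N → ℝ) (i : Fin N) : Set (EuclideanSpace ℝ (Fin d)) :=
  {x ∈ Ω | ∀ j, G x j (ψ j) ≤ G x i (ψ i)}

/-- Interface `Γᵢⱼ(ψ)` between two cells. -/
def Gam (Ω : Set (EuclideanSpace ℝ (Fin d))) (G : EuclideanSpace ℝ (Fin d) → Fin N → ℝ → ℝ)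
    (ψ : Fin N → ℝ) (i j : Fin N) : Set (EuclideanSpace ℝ (Fin d)) :=
  {x ∈ Ω | G x i (ψ i) = G x j (ψ j)}

/-- The mass function `H(ψ) = (μ(Lagᵢ(ψ)))ᵢ` where `μ` has density `ρ`. -/
def Hfun (Ω : Set (EuclideanSpace ℝ (Fin d))) (G : EuclideanSpace ℝ (Fin d) → Fin N → ℝ → ℝ)
    (ρ : EuclideanSpace ℝ (Fin d) → ℝ) (ψ : Fin N → ℝ) : Fin N → ℝ :=
  fun i => ((volume.withDensity fun x => ENNReal.ofReal (ρ x)) (Lag Ω G ψ i)).toReal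

/-!
The mass of a Laguerre cell is upper semicontinuous in `ψ`, because for fixed `x` the condition
`x ∈ Lagᵢ(ψ)` is closed in `ψ`; hence the admissible set is closed. Lowering one coordinate far
enough makes its cell swallow all the mass. Therefore, if `α` is so low that `G x i₀ α` exceeds
every `G x i 0`, a cell `i` with positive mass has `ψ i ≤ 0`, and a coordinate that is too low would
starve the cell `i₀`: the admissible set is bounded.

For non-emptiness, start with all the mass in the cell `i₀` and activate the other cells one at a
time, giving cell `k` the largest `ψ k` for which its mass is at least half of the current lower
bound `2c`. Any slightly larger `ψ k` leaves mass less than `c` in cell `k`, so every previously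
active cell lost less than `c`; by semicontinuity it keeps at least `c` in the limit.
-/

open Filter Topology

section Measure

variable {E P : Type*} [MeasurableSpace E] {μ : Measure E} [IsFiniteMeasure μ]

lemma le_measure_limsup_atTop {A : ℕ → Set E} (hA : ∀ n, NullMeasurableSet (A n) μ) {c : ENNReal}
    (hc : ∀ n, c ≤ μ (A n)) : c ≤ μ (limsup A atTop) := by
  have htail : Tendsto (fun n => μ (⋃ m ≥ n, A m)) atTop (𝓝 (μ (⋂ n, ⋃ m ≥ n, A m))) :=
    tendsto_measure_iInter_atTop (fun n => .iUnion fun m => .iUnion fun _ => hA m)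
      (fun _ _ hab => biUnion_subset_biUnion_left fun _ hm => hab.trans hm)
      ⟨0, measure_ne_top _ _⟩
  rw [limsup_eq_iInf_iSup_of_nat]
  exact ge_of_tendsto' htail fun n =>
    (hc n).trans (measure_mono (subset_biUnion_of_mem (u := A) (mem_Ici.2 le_rfl)))

lemma upperSemicontinuous_measureReal_of_ae_isClosed [TopologicalSpace P]
    [FirstCountableTopology P] {A : P → Set E} (hA : ∀ p, NullMeasurableSet (A p) μ)
    (hclosed : ∀ᵐ x ∂μ, IsClosed {p | x ∈ A p}) :
    UpperSemicontinuous fun p => μ.real (A p) := by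
  refine upperSemicontinuous_iff_isClosed_preimage.2 fun c => IsSeqClosed.isClosed ?_
  intro u p hu hlim
  have hle : ENNReal.ofReal c ≤ μ (limsup (fun n => A (u n)) atTop) :=
    le_measure_limsup_atTop (fun n => hA _) fun n => ENNReal.ofReal_le_of_le_toReal (hu n)
  have hsub : ∀ᵐ x ∂μ, x ∈ limsup (fun n => A (u n)) atTop → x ∈ A p := by
    filter_upwards [hclosed] with x hx hmem
    have hfreq : ∃ᶠ n in atTop, u n ∈ {q | x ∈ A q} := mem_limsup_iff_frequently_mem.1 hmem
    exact hx.mem_of_frequently_of_tendsto hfreq hlim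
  exact (ENNReal.ofReal_le_iff_le_toReal (measure_ne_top _ _)).1 (hle.trans (measure_mono_ae hsub))

end Measure

section LaguerreCell

variable {E ι : Type*}

/-- The generalized Laguerre cell of index `i` in the whole space: the points where the maximum of
`j ↦ G x j (ψ j)` is attained at `i`. The cell `Lag Ω G ψ i` is its trace on `Ω`. -/
def laguerreCell (G : E → ι → ℝ → ℝ) (ψ : ι → ℝ) (i : ι) : Set E :=
  {x | ∀ j, G x j (ψ j) ≤ G x i (ψ i)}

variable {G : E → ι → ℝ → ℝ} {ψ : ι → ℝ} {i₀ i j k : ι} {α c δ : ℝ}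

lemma laguerreCell_subset_union_update [DecidableEq ι] (hjk : j ≠ k) (t : ℝ) :
    laguerreCell G ψ j ⊆ laguerreCell G (Function.update ψ k t) j ∪
      laguerreCell G (Function.update ψ k t) k := by
  intro x hx
  rcases le_total (G x k t) (G x j (ψ j)) with hle | hle
  · refine .inl fun l => ?_
    rcases eq_or_ne l k with rfl | hl
    · simpa [hjk] using hle
    · simpa [hjk, hl] using hx l
  · refine .inr fun l => ?_
    rcases eq_or_ne l k with rfl | hl
    · exact le_rfl
    · simpa [hl] using (hx l).trans hle

variable [MeasurableSpace E] {μ : Measure E}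

lemma nullMeasurableSet_laguerreCell [Countable ι]
    (hmeas : ∀ i v, AEMeasurable (fun x => G x i v) μ) (ψ : ι → ℝ) (i : ι) :
    NullMeasurableSet (laguerreCell G ψ i) μ := by
  rw [laguerreCell, ofPred_forall]
  exact .iInter fun j => nullMeasurableSet_le (hmeas j (ψ j)) (hmeas i (ψ i))

lemma measureReal_laguerreCell_eq_zero (h : ∀ᵐ x ∂μ, G x i (ψ i) < G x j (ψ j)) :
    μ.real (laguerreCell G ψ i) = 0 := by
  have hnull : μ (laguerreCell G ψ i) = 0 :=
    measure_eq_zero_iff_ae_notMem.2 (h.mono fun x hx hmem => (hmem j).not_gt hx)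
  rw [measureReal_def, hnull, ENNReal.toReal_zero]

lemma measureReal_laguerreCell_update_eq_one [IsProbabilityMeasure μ] [DecidableEq ι] {t : ℝ}
    (h : ∀ᵐ x ∂μ, ∀ j, G x j (ψ j) ≤ G x k t) :
    μ.real (laguerreCell G (Function.update ψ k t) k) = 1 := by
  have hfull : laguerreCell G (Function.update ψ k t) k ∈ ae μ := by
    filter_upwards [h] with x hx j
    rcases eq_or_ne j k with rfl | hj
    · exact le_rfl
    · simpa [hj] using hx j
  rw [measureReal_congr (eventuallyEq_univ.2 hfull), probReal_univ]

section FiniteMeasure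

variable [IsFiniteMeasure μ]

lemma upperSemicontinuous_measureReal_laguerreCell [Countable ι]
    (hmeas : ∀ i v, AEMeasurable (fun x => G x i v) μ)
    (hcont : ∀ᵐ x ∂μ, ∀ i, Continuous (G x i)) (i : ι) :
    UpperSemicontinuous fun ψ => μ.real (laguerreCell G ψ i) := by
  refine upperSemicontinuous_measureReal_of_ae_isClosed
    (fun ψ => nullMeasurableSet_laguerreCell hmeas ψ i) ?_
  filter_upwards [hcont] with x hx
  have hinter : {ψ | x ∈ laguerreCell G ψ i} = ⋂ j, {ψ | G x j (ψ j) ≤ G x i (ψ i)} :=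
    ofPred_forall _
  rw [hinter]
  exact isClosed_iInter fun j => isClosed_le
    ((hx j).comp (continuous_apply j)) ((hx i).comp (continuous_apply i))

lemma measureReal_laguerreCell_le_add_update [DecidableEq ι] (hjk : j ≠ k) (t : ℝ) :
    μ.real (laguerreCell G ψ j) ≤ μ.real (laguerreCell G (Function.update ψ k t) j) +
      μ.real (laguerreCell G (Function.update ψ k t) k) :=
  (measureReal_mono (laguerreCell_subset_union_update hjk t)).trans (measureReal_union_le _ _)

lemma exists_update_le_measureReal_laguerreCell [Countable ι] [DecidableEq ι]
    (hmeas : ∀ i v, AEMeasurable (fun x => G x i v) μ)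
    (hcont : ∀ᵐ x ∂μ, ∀ i, Continuous (G x i))
    (hne : {t | c ≤ μ.real (laguerreCell G (Function.update ψ k t) k)}.Nonempty)
    (hbdd : BddAbove {t | c ≤ μ.real (laguerreCell G (Function.update ψ k t) k)}) :
    ∃ t, c ≤ μ.real (laguerreCell G (Function.update ψ k t) k) ∧
      ∀ j ≠ k, c + c ≤ μ.real (laguerreCell G ψ j) →
        c ≤ μ.real (laguerreCell G (Function.update ψ k t) j) := by
  have hclosed (j : ι) : IsClosed {t | c ≤ μ.real (laguerreCell G (Function.update ψ k t) j)} :=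
    ((upperSemicontinuous_measureReal_laguerreCell hmeas hcont j).isClosed_preimage c).preimage
      (continuous_const.update k continuous_id)
  obtain ⟨t, ht, hmax⟩ : ∃ t, IsGreatest _ t := ⟨_, (hclosed k).isGreatest_csSup hne hbdd⟩
  refine ⟨t, ht, fun j hjk hj => ?_⟩
  have hright : Ioi t ⊆ {s | c ≤ μ.real (laguerreCell G (Function.update ψ k s) j)} := by
    intro s hs
    have hlt : μ.real (laguerreCell G (Function.update ψ k s) k) < c :=
      not_le.1 fun hle => (hmax hle).not_gt hs
    have hloss := measureReal_laguerreCell_le_add_update (μ := μ) (G := G) (ψ := ψ) hjk s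
    rw [mem_ofPred_eq]
    linarith
  exact closure_minimal hright (hclosed j) (by simp)

end FiniteMeasure

lemma eventually_atBot_ae_forall_lt [Finite ι] (hbdd : ∀ i v, ∃ C, ∀ᵐ x ∂μ, G x i v ≤ C)
    (hlim : ∀ i M, ∀ᶠ v in atBot, ∀ᵐ x ∂μ, M ≤ G x i v) (ψ : ι → ℝ) (k : ι) :
    ∀ᶠ t in atBot, ∀ᵐ x ∂μ, ∀ j, G x j (ψ j) < G x k t := by
  simp only [eventually_all]
  intro j
  obtain ⟨C, hC⟩ := hbdd j (ψ j)
  filter_upwards [hlim k (C + 1)] with t ht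
  filter_upwards [hC, ht] with x hxC hxt
  linarith

lemma nonpos_of_measureReal_laguerreCell_pos (hanti : ∀ᵐ x ∂μ, ∀ i, Antitone (G x i))
    (hα : ∀ᵐ x ∂μ, ∀ i, G x i 0 < G x i₀ α) (hψ : ψ i₀ = α)
    (hpos : 0 < μ.real (laguerreCell G ψ i)) : ψ i ≤ 0 := by
  by_contra! hψi
  refine hpos.ne' (measureReal_laguerreCell_eq_zero (j := i₀) ?_)
  filter_upwards [hanti, hα] with x hx hxα
  exact hψ ▸ (hx i hψi.le).trans_lt (hxα i)

/-- The admissible set: the vectors `ψ` with `ψ i₀ = α` all of whose Laguerre cells have `μ`-mass at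
least `δ`. -/
def admissibleSet (μ : Measure E) (G : E → ι → ℝ → ℝ) (i₀ : ι) (α δ : ℝ) : Set (ι → ℝ) :=
  {ψ | ψ i₀ = α ∧ ∀ i, δ ≤ μ.real (laguerreCell G ψ i)}

lemma isClosed_admissibleSet [IsFiniteMeasure μ] [Countable ι]
    (hmeas : ∀ i v, AEMeasurable (fun x => G x i v) μ)
    (hcont : ∀ᵐ x ∂μ, ∀ i, Continuous (G x i)) (i₀ : ι) (α δ : ℝ) :
    IsClosed (admissibleSet μ G i₀ α δ) := by
  simp only [admissibleSet, ofPred_and, ofPred_forall]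
  exact (isClosed_eq (continuous_apply i₀) continuous_const).inter <| isClosed_iInter fun i =>
    (upperSemicontinuous_measureReal_laguerreCell hmeas hcont i).isClosed_preimage δ

lemma bddBelow_admissibleSet [Finite ι] (hbdd : ∀ i v, ∃ C, ∀ᵐ x ∂μ, G x i v ≤ C)
    (hlim : ∀ i M, ∀ᶠ v in atBot, ∀ᵐ x ∂μ, M ≤ G x i v) (hδ : 0 < δ) :
    BddBelow (admissibleSet μ G i₀ α δ) := by
  have hstarve (i : ι) : ∃ v, ∀ t ≤ v, ∀ᵐ x ∂μ, G x i₀ α < G x i t := by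
    refine eventually_atBot.1 ?_
    filter_upwards [eventually_atBot_ae_forall_lt hbdd hlim (fun _ => α) i] with t ht
    exact ht.mono fun x hx => hx i₀
  choose v hv using hstarve
  refine ⟨v, fun ψ hψ i => ?_⟩
  by_contra! hlt
  have hzero : μ.real (laguerreCell G ψ i₀) = 0 :=
    measureReal_laguerreCell_eq_zero (j := i) (by simpa only [hψ.1] using hv i (ψ i) hlt.le)
  exact (hδ.trans_le (hψ.2 i₀)).ne' hzero

lemma isCompact_admissibleSet [IsFiniteMeasure μ] [Finite ι]
    (hmeas : ∀ i v, AEMeasurable (fun x => G x i v) μ)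
    (hcont : ∀ᵐ x ∂μ, ∀ i, Continuous (G x i)) (hanti : ∀ᵐ x ∂μ, ∀ i, Antitone (G x i))
    (hbdd : ∀ i v, ∃ C, ∀ᵐ x ∂μ, G x i v ≤ C)
    (hlim : ∀ i M, ∀ᶠ v in atBot, ∀ᵐ x ∂μ, M ≤ G x i v)
    (hα : ∀ᵐ x ∂μ, ∀ i, G x i 0 < G x i₀ α) (hδ : 0 < δ) :
    IsCompact (admissibleSet μ G i₀ α δ) := by
  obtain ⟨v, hv⟩ := bddBelow_admissibleSet (i₀ := i₀) (α := α) hbdd hlim hδ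
  refine (isCompact_Icc (a := v) (b := 0)).of_isClosed_subset
    (isClosed_admissibleSet hmeas hcont i₀ α δ) fun ψ hψ => ⟨hv hψ, fun i => ?_⟩
  exact nonpos_of_measureReal_laguerreCell_pos hanti hα hψ.1 (hδ.trans_le (hψ.2 i))

lemma exists_half_pow_card_le_measureReal_laguerreCell [IsProbabilityMeasure μ] [Finite ι]
    [DecidableEq ι] (hmeas : ∀ i v, AEMeasurable (fun x => G x i v) μ)
    (hcont : ∀ᵐ x ∂μ, ∀ i, Continuous (G x i)) (hanti : ∀ᵐ x ∂μ, ∀ i, Antitone (G x i))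
    (hbdd : ∀ i v, ∃ C, ∀ᵐ x ∂μ, G x i v ≤ C)
    (hlim : ∀ i M, ∀ᶠ v in atBot, ∀ᵐ x ∂μ, M ≤ G x i v)
    (hα : ∀ᵐ x ∂μ, ∀ i, G x i 0 < G x i₀ α) (s : Finset ι) (hs : i₀ ∉ s) :
    ∃ ψ : ι → ℝ, ψ i₀ = α ∧
      ∀ j ∈ insert i₀ s, (1 / 2) ^ s.card ≤ μ.real (laguerreCell G ψ j) := by
  induction s using Finset.induction_on with
  | empty =>
    refine ⟨Function.update 0 i₀ α, by simp, ?_⟩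
    have hfull : μ.real (laguerreCell G (Function.update 0 i₀ α) i₀) = 1 :=
      measureReal_laguerreCell_update_eq_one (hα.mono fun x hx j => (hx j).le)
    simp [hfull]
  | insert k s hk ih =>
    obtain ⟨hk₀, hs₀⟩ : i₀ ≠ k ∧ i₀ ∉ s := by simpa using hs
    obtain ⟨ψ, hψ₀, hψ⟩ := ih hs₀
    rw [Finset.card_insert_of_notMem hk]
    set c : ℝ := (1 / 2) ^ (s.card + 1) with hc
    have hcc : c + c = (1 / 2) ^ s.card := by rw [hc]; ring
    have hne : {t | c ≤ μ.real (laguerreCell G (Function.update ψ k t) k)}.Nonempty := by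
      obtain ⟨t, ht⟩ := (eventually_atBot_ae_forall_lt hbdd hlim ψ k).exists
      have hfull := measureReal_laguerreCell_update_eq_one (ht.mono fun x hx j => (hx j).le)
      exact ⟨t, (pow_le_one₀ (by norm_num) (by norm_num)).trans_eq hfull.symm⟩
    have hbddAbove : BddAbove {t | c ≤ μ.real (laguerreCell G (Function.update ψ k t) k)} := by
      refine ⟨0, fun t ht => ?_⟩
      have hpos := (show 0 < c by positivity).trans_le ht
      simpa using nonpos_of_measureReal_laguerreCell_pos hanti hα (by simp [hk₀, hψ₀]) hpos
    obtain ⟨t, ht, hkeep⟩ := exists_update_le_measureReal_laguerreCell hmeas hcont hne hbddAbove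
    refine ⟨Function.update ψ k t, by simp [hk₀, hψ₀], fun j hj => ?_⟩
    rcases eq_or_ne j k with rfl | hjk
    · exact ht
    · exact hkeep j hjk (hcc.trans_le (hψ j (by simpa [hjk] using hj)))

lemma admissibleSet_nonempty [IsProbabilityMeasure μ] [Fintype ι]
    (hmeas : ∀ i v, AEMeasurable (fun x => G x i v) μ)
    (hcont : ∀ᵐ x ∂μ, ∀ i, Continuous (G x i)) (hanti : ∀ᵐ x ∂μ, ∀ i, Antitone (G x i))
    (hbdd : ∀ i v, ∃ C, ∀ᵐ x ∂μ, G x i v ≤ C)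
    (hlim : ∀ i M, ∀ᶠ v in atBot, ∀ᵐ x ∂μ, M ≤ G x i v)
    (hα : ∀ᵐ x ∂μ, ∀ i, G x i 0 < G x i₀ α) (hδ : δ ≤ 1 / 2 ^ (Fintype.card ι - 1)) :
    (admissibleSet μ G i₀ α δ).Nonempty := by
  classical
  obtain ⟨ψ, hψ₀, hψ⟩ := exists_half_pow_card_le_measureReal_laguerreCell hmeas hcont hanti hbdd
    hlim hα (Finset.univ.erase i₀) (Finset.notMem_erase _ _)
  refine ⟨ψ, hψ₀, fun i => hδ.trans ?_⟩
  simpa [Finset.card_erase_of_mem] using hψ i (by simp)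

theorem admissible_set_compact_nonempty_general [IsProbabilityMeasure μ] [Fintype ι]
    (hmeas : ∀ i v, AEMeasurable (fun x => G x i v) μ)
    (hcont : ∀ᵐ x ∂μ, ∀ i, Continuous (G x i)) (hanti : ∀ᵐ x ∂μ, ∀ i, Antitone (G x i))
    (hbdd : ∀ i v, ∃ C, ∀ᵐ x ∂μ, G x i v ≤ C)
    (hlim : ∀ i M, ∀ᶠ v in atBot, ∀ᵐ x ∂μ, M ≤ G x i v) (i₀ : ι) :
    ∀ᶠ α in atBot, ∀ δ : ℝ, 0 < δ → IsCompact (admissibleSet μ G i₀ α δ) ∧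
      (δ ≤ 1 / 2 ^ (Fintype.card ι - 1) → (admissibleSet μ G i₀ α δ).Nonempty) := by
  filter_upwards [eventually_atBot_ae_forall_lt hbdd hlim 0 i₀] with α hα δ hδ
  exact ⟨isCompact_admissibleSet hmeas hcont hanti hbdd hlim hα hδ,
    admissibleSet_nonempty hmeas hcont hanti hbdd hlim hα⟩

end LaguerreCell

section Density

variable {E : Type*} [MeasurableSpace E] {μ : Measure E} {ρ : E → ℝ}

lemma isProbabilityMeasure_withDensity_ofReal (hρ : 0 ≤ᵐ[μ] ρ) (hρ1 : ∫ x, ρ x ∂μ = 1) :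
    IsProbabilityMeasure (μ.withDensity fun x => ENNReal.ofReal (ρ x)) := by
  have hint : Integrable ρ μ := .of_integral_ne_zero (by simp [hρ1])
  constructor
  rw [withDensity_apply _ .univ, Measure.restrict_univ,
    ← ofReal_integral_eq_lintegral_ofReal hint hρ, hρ1, ENNReal.ofReal_one]

lemma ae_withDensity_ofReal_mem_of_support_subset (hρ : Measurable ρ) {X : Set E}
    (hX : Function.support ρ ⊆ X) :
    ∀ᵐ x ∂μ.withDensity fun x => ENNReal.ofReal (ρ x), x ∈ X := by
  refine (ae_withDensity_iff hρ.ennreal_ofReal).2 (.of_forall fun x hx => hX fun hzero => hx ?_)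
  rw [hzero, ENNReal.ofReal_zero]

end Density

lemma Hfun_eq_measureReal_laguerreCell {Ω : Set (EuclideanSpace ℝ (Fin d))}
    {ρ : EuclideanSpace ℝ (Fin d) → ℝ}
    (hΩ : ∀ᵐ x ∂volume.withDensity fun x => ENNReal.ofReal (ρ x), x ∈ Ω)
    (G : EuclideanSpace ℝ (Fin d) → Fin N → ℝ → ℝ) (ψ : Fin N → ℝ) (i : Fin N) :
    Hfun Ω G ρ ψ i =
      (volume.withDensity fun x => ENNReal.ofReal (ρ x)).real (laguerreCell G ψ i) := by
  refine measureReal_congr ?_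
  filter_upwards [hΩ] with x hx
  exact propext (and_iff_right hx)

/-- Lemma 3.7 (admissible set): for any `δ > 0` there is `α ∈ ℝ` making the set
`S_ad = {ψ : ψ₁ = α, ∀i Hᵢ(ψ) ≥ δ}` compact; it is non-empty as soon as
`δ ≤ 1/2^(N−1)`. -/
theorem admissible_set_compact_nonempty
    (hd : 1 ≤ d) (hN : 1 ≤ N)
    {Ω : Set (EuclideanSpace ℝ (Fin d))} (hΩo : IsOpen Ω) (hΩb : Bornology.IsBounded Ω)
    (y : Fin N → EuclideanSpace ℝ (Fin d)) (hy : Function.Injective y)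
    (G : EuclideanSpace ℝ (Fin d) → Fin N → ℝ → ℝ)
    (Gx : EuclideanSpace ℝ (Fin d) → Fin N → ℝ → EuclideanSpace ℝ (Fin d))
    (Gv : EuclideanSpace ℝ (Fin d) → Fin N → ℝ → ℝ)
    (hGx : ∀ x ∈ Ω, ∀ (i : Fin N) (v : ℝ), HasGradientAt (fun x' => G x' i v) (Gx x i v) x)
    (hGv : ∀ x ∈ Ω, ∀ (i : Fin N) (v : ℝ), HasDerivAt (fun v' => G x i v') (Gv x i v) v)
    (hGxc : ∀ i : Fin N, ContinuousOn (fun q : EuclideanSpace ℝ (Fin d) × ℝ => Gx q.1 i q.2) (Ω ×ˢ Set.univ))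
    (hGvc : ∀ i : Fin N, ContinuousOn (fun q : EuclideanSpace ℝ (Fin d) × ℝ => Gv q.1 i q.2) (Ω ×ˢ Set.univ))
    (hG2 : ∀ i : Fin N, ContDiffOn ℝ 2 (fun q : EuclideanSpace ℝ (Fin d) × ℝ => G q.1 i q.2) (Ω ×ˢ Set.univ))
    (hReg : ∀ α β : ℝ, α < β → ∃ C : ℝ, ∀ x ∈ Ω, ∀ i : Fin N, ∀ v ∈ Set.Icc α β, ‖Gx x i v‖ ≤ C)
    (hMono : ∀ x ∈ Ω, ∀ (i : Fin N) (v : ℝ), Gv x i v < 0)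
    (hTwist : ∀ x ∈ Ω, Function.Injective fun q : Fin N × ℝ => (G x q.1 q.2, Gx x q.1 q.2))
    (hUC : ∀ (i : Fin N) (M : ℝ), ∃ v₀ : ℝ, ∀ v ≤ v₀, ∀ x ∈ Ω, M ≤ G x i v)
    {X : Set (EuclideanSpace ℝ (Fin d))} (hXc : IsCompact X) (hXΩ : X ⊆ Ω)
    (ρ : EuclideanSpace ℝ (Fin d) → ℝ) (hρc : Continuous ρ) (hρ0 : ∀ x, 0 ≤ ρ x)
    (hρsupp : tsupport ρ ⊆ X) (hρ1 : (∫ x, ρ x) = 1)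
    (hGenΩ : ∀ (ψ : Fin N → ℝ) (i j k : Fin N), i ≠ j → i ≠ k → j ≠ k →
      μH[(d : ℝ) - 1] (Gam Ω G ψ i j ∩ Gam Ω G ψ i k) = 0)
    (hGenX : ∀ (ψ : Fin N → ℝ) (i j : Fin N), i ≠ j →
      μH[(d : ℝ) - 1] (Gam Ω G ψ i j ∩ frontier X) = 0)
 :
    ∀ δ : ℝ, 0 < δ → ∃ α : ℝ,
      IsCompact {ψ : Fin N → ℝ | ψ ⟨0, hN⟩ = α ∧ ∀ i : Fin N, δ ≤ Hfun Ω G ρ ψ i} ∧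
      (δ ≤ 1 / 2 ^ (N - 1) →
        {ψ : Fin N → ℝ | ψ ⟨0, hN⟩ = α ∧ ∀ i : Fin N, δ ≤ Hfun Ω G ρ ψ i}.Nonempty) := by
  have hprob := isProbabilityMeasure_withDensity_ofReal (.of_forall hρ0) hρ1
  have hX := ae_withDensity_ofReal_mem_of_support_subset (μ := volume) hρc.measurable
    ((subset_tsupport ρ).trans hρsupp)
  have hΩ := hX.mono hXΩ
  have hcontX (i : Fin N) (v : ℝ) : ContinuousOn (fun x => G x i v) X := fun x hx =>
    (hGx x (hXΩ hx) i v).continuousAt.continuousWithinAt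
  have hmeas (i : Fin N) (v : ℝ) := Measure.restrict_eq_self_of_ae_mem hX ▸
    (hcontX i v).aemeasurable hXc.measurableSet
  have hcont := hΩ.mono fun x hx i =>
    continuous_iff_continuousAt.2 fun v => (hGv x hx i v).continuousAt
  have hanti := hΩ.mono fun x hx i =>
    (strictAnti_of_hasDerivAt_neg (hGv x hx i) (hMono x hx i)).antitone
  have hbdd (i : Fin N) (v : ℝ) := (hXc.bddAbove_image (hcontX i v)).imp fun C hC =>
    hX.mono fun x hx => hC (mem_image_of_mem _ hx)
  have hlim (i : Fin N) (M : ℝ) := (eventually_atBot.2 (hUC i M)).mono fun v hv => hΩ.mono hv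
  obtain ⟨α, hα⟩ :=
    (admissible_set_compact_nonempty_general hmeas hcont hanti hbdd hlim ⟨0, hN⟩).exists
  refine fun δ hδ => ⟨α, ?_⟩
  simpa only [admissibleSet, Hfun_eq_measureReal_laguerreCell hΩ, Fintype.card_fin] using hα δ hδ
end
end

section
/- Let X ⊆ ℝ² be compact, Y ⊆ ℝ² finite, and let γ > 0 satisfy γ · ‖x − y‖ < 1 for all (x,y) ∈ X × Y. Define G(x,y,v) = 1/(2v) − (v/2)‖x − y‖² for v > 0, so that ∇ₓG(x,y,v) = v(y − x). Then for every x ∈ X, the map (y,v) ↦ (G(x,y,v), v(y − x)) is injective on Y × (0, γ]; that is, if y₁, y₂ ∈ Y and v₁, v₂ ∈ (0,γ] satisfy G(x,y₁,v₁) = G(x,y₂,v₂) and v₁(y₁ − x) = v₂(y₂ − x), then (y₁,v₁) = (y₂,v₂). -/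
set_option autoImplicit false

open MeasureTheory Set

noncomputable section

/-! Writing `p = v (y - x)` for the gradient, one has `2 v G(x, y, v) = 1 - ‖p‖²`. Hence `v` can be
recovered from the pair `(G, p)` as soon as `‖p‖ ≠ 1`, and then `y = x + v⁻¹ p`. -/

section NormedSpace

variable {E : Type*} [SeminormedAddCommGroup E]

/-- The generating function of the near-field parallel reflector problem, with source point `x`,
target point `y` and focal parameter `v`. Its gradient in `x` is `v • (y - x)` when `E` is an inner
product space. Only `v ≠ 0` is meaningful, since the term `1 / (2 * v)` is `0` at `v = 0`. -/
def reflectorG (x y : E) (v : ℝ) : ℝ :=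
  1 / (2 * v) - v / 2 * ‖x - y‖ ^ 2

variable [NormedSpace ℝ E] {x y y₁ y₂ : E} {v v₁ v₂ γ : ℝ}

lemma two_mul_mul_reflectorG (hv : v ≠ 0) :
    2 * v * reflectorG x y v = 1 - ‖v • (y - x)‖ ^ 2 := by
  rw [reflectorG, norm_smul, mul_pow, Real.norm_eq_abs, sq_abs, norm_sub_rev y x]
  field_simp

lemma norm_smul_sub_lt_one (hv : 0 ≤ v) (hvγ : v ≤ γ) (hγ : γ * ‖x - y‖ < 1) :
    ‖v • (y - x)‖ < 1 :=
  calc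
    ‖v • (y - x)‖ = v * ‖x - y‖ := by rw [norm_smul_of_nonneg hv, norm_sub_rev]
    _ ≤ γ * ‖x - y‖ := by gcongr
    _ < 1 := hγ

lemma focal_parameter_eq_of_reflectorG_eq (hv₁ : v₁ ≠ 0) (hv₂ : v₂ ≠ 0)
    (hp : ‖v₁ • (y₁ - x)‖ ≠ 1) (hG : reflectorG x y₁ v₁ = reflectorG x y₂ v₂)
    (hgrad : v₁ • (y₁ - x) = v₂ • (y₂ - x)) : v₁ = v₂ := by
  have h_eq : 2 * v₁ * reflectorG x y₁ v₁ = 2 * v₂ * reflectorG x y₁ v₁ := by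
    rw [two_mul_mul_reflectorG hv₁, hgrad, hG, two_mul_mul_reflectorG hv₂]
  have h_ne : 2 * v₁ * reflectorG x y₁ v₁ ≠ 0 := by
    rw [two_mul_mul_reflectorG hv₁, sub_ne_zero]
    exact fun h => hp ((pow_eq_one_iff_of_nonneg (norm_nonneg _) two_ne_zero).mp h.symm)
  exact mul_left_cancel₀ two_ne_zero (mul_right_cancel₀ (right_ne_zero_of_mul h_ne) h_eq)

theorem reflector_twist_condition_general (hv₁ : v₁ ≠ 0) (hv₂ : v₂ ≠ 0)
    (hp : ‖v₁ • (y₁ - x)‖ ≠ 1) (hG : reflectorG x y₁ v₁ = reflectorG x y₂ v₂)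
    (hgrad : v₁ • (y₁ - x) = v₂ • (y₂ - x)) : y₁ = y₂ ∧ v₁ = v₂ := by
  obtain rfl : v₁ = v₂ := focal_parameter_eq_of_reflectorG_eq hv₁ hv₂ hp hG hgrad
  exact ⟨sub_left_injective (smul_right_injective E hv₁ hgrad), rfl⟩

end NormedSpace

/-- Proposition 4.1: the generating function `G(x,y,v) = 1/(2v) − (v/2)‖x−y‖²` of the
near-field parallel reflector problem satisfies the Twist condition on `X × Y × (0,γ]`
when `γ‖x−y‖ < 1` on `X × Y`. -/
theorem reflector_twist_condition
    (X Y : Set (EuclideanSpace ℝ (Fin 2))) (hX : IsCompact X) (hY : Y.Finite)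
    (γ : ℝ) (hγ : 0 < γ) (hγXY : ∀ x ∈ X, ∀ y ∈ Y, γ * ‖x - y‖ < 1) :
    ∀ x ∈ X, ∀ y₁ ∈ Y, ∀ y₂ ∈ Y, ∀ v₁ ∈ Set.Ioc 0 γ, ∀ v₂ ∈ Set.Ioc 0 γ,
      1 / (2 * v₁) - v₁ / 2 * ‖x - y₁‖ ^ 2 = 1 / (2 * v₂) - v₂ / 2 * ‖x - y₂‖ ^ 2 →
      v₁ • (y₁ - x) = v₂ • (y₂ - x) →
      y₁ = y₂ ∧ v₁ = v₂ := by
  intro x hx y₁ hy₁ _ _ v₁ hv₁ v₂ hv₂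
  exact reflector_twist_condition_general hv₁.1.ne' hv₂.1.ne'
    (norm_smul_sub_lt_one hv₁.1.le hv₁.2 (hγXY x hx y₁ hy₁)).ne
end
end
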